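/- arXiv:2601.01133 — 3 statements merged into one kernel-verified Lean document; each statement's English description precedes it below -/
import Mathlib

section
/- Let G be a finite group such that the difference graph D(G) has at least one vertex. Then the domination number of D(G) equals 1 if and only if G is a Φ-group. Moreover, if the domination number of D(G) is 1, then the unique dominating set of size one is {u}, where u is the unique involution of G that commutes with at least one element of odd prime order. -/
/-- Adjacency in the difference of the enhanced power graph and the power graph:
`⟨x, y⟩` is cyclic but neither of `x`, `y` is a power of the other. -/
def diffAdj {G : Type*} [Group G] (x y : G) : Prop :=
  IsCyclic (Subgroup.closure ({x, y} : Set G)) ∧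
    (¬ ∃ k : ℤ, y = x ^ k) ∧ (¬ ∃ k : ℤ, x = y ^ k)

/-- The vertex set of the difference graph `𝒟(G)`: the elements of `G` that are
non-isolated in the difference of the enhanced power graph and the power graph. -/
abbrev DiffVertex (G : Type*) [Group G] := {x : G // ∃ y, diffAdj x y}

/-- The difference graph `𝒟(G)` of a group `G`. -/
def diffGraph (G : Type*) [Group G] : SimpleGraph (DiffVertex G) :=
  SimpleGraph.fromRel (fun a b => diffAdj a.val b.val)

/-- A dominating set of a graph: every vertex is in `S` or adjacent to a vertex of `S`. -/
def IsDominatingSet {V : Type*} (Γ : SimpleGraph V) (S : Set V) : Prop :=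
  ∀ v : V, v ∈ S ∨ ∃ u ∈ S, Γ.Adj u v

/-- The domination number of a graph: the least size of a dominating set. -/
noncomputable def dominationNumber {V : Type*} (Γ : SimpleGraph V) : ℕ :=
  sInf {n : ℕ | ∃ S : Set V, IsDominatingSet Γ S ∧ S.ncard = n}

/-- A maximal cyclic subgroup: a cyclic subgroup not properly contained in
another cyclic subgroup. -/
def IsMaxCyclic {G : Type*} [Group G] (C : Subgroup G) : Prop :=
  IsCyclic C ∧ ∀ D : Subgroup G, IsCyclic D → C ≤ D → C = D

/-- A `Φ`-group: (a) there is a unique involution `u` commuting with some element of odd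
prime order; (b) every non-trivial element of odd order generates a maximal cyclic
subgroup, or lies only in cyclic subgroups of prime-power order, or has prime order and
commutes with `u`; (c) every element `g ≠ u` of even order generates a maximal cyclic
subgroup or lies only in cyclic subgroups of prime-power order. -/
def IsPhiGroup (G : Type*) [Group G] : Prop :=
  ∃ u : G,
    (orderOf u = 2 ∧ ∃ g : G, Commute u g ∧ (orderOf g).Prime ∧ Odd (orderOf g)) ∧
    (∀ w : G, orderOf w = 2 →
      (∃ g : G, Commute w g ∧ (orderOf g).Prime ∧ Odd (orderOf g)) → w = u) ∧
    (∀ g : G, g ≠ 1 → Odd (orderOf g) →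
      IsMaxCyclic (Subgroup.zpowers g) ∨
      (∀ C : Subgroup G, IsCyclic C → g ∈ C → IsPrimePow (Nat.card C)) ∨
      ((orderOf g).Prime ∧ Commute g u)) ∧
    (∀ g : G, g ≠ u → Even (orderOf g) →
      IsMaxCyclic (Subgroup.zpowers g) ∨
      (∀ C : Subgroup G, IsCyclic C → g ∈ C → IsPrimePow (Nat.card C)))

/-!
Elements of a cyclic subgroup `⟨d⟩` of a torsion group are powers of one another exactly when their
orders divide one another, so `x` is adjacent to some `y ∈ ⟨d⟩` iff `orderOf d` has a divisor
incomparable with `orderOf x` for divisibility. By arithmetic this happens for some `d` unless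
`x = 1`, `⟨x⟩` is maximal cyclic, or every cyclic subgroup containing `x` has prime-power order.
These are the alternatives in the definition of a `Φ`-group.

A dominating vertex `u` satisfies `u⁻¹ = u`, since `u⁻¹` is a vertex not adjacent to `u`. An
involution is adjacent precisely to the nontrivial elements of odd order in its centralizer. So
every vertex `v ≠ u` has odd order and commutes with `u`; if `orderOf v` were not prime, an element
of `⟨u * v⟩` of order `2 * p`, with `p` a prime divisor of `orderOf v`, would be adjacent to `v` and
hence a vertex of even order.
-/

theorem exists_dvd_incomparable_iff {n N : ℕ} (hn : n ∣ N) :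
    (∃ m, m ∣ N ∧ ¬ m ∣ n ∧ ¬ n ∣ m) ↔ n ≠ 1 ∧ n ≠ N ∧ ¬ IsPrimePow N := by
  constructor
  · rintro ⟨m, hm, hmn, hnm⟩
    refine ⟨by rintro rfl; exact hnm (one_dvd m), by rintro rfl; exact hmn hm, fun hN => ?_⟩
    obtain ⟨p, k, hp, -, rfl⟩ := (isPrimePow_nat_iff N).1 hN
    obtain ⟨a, -, rfl⟩ := (Nat.dvd_prime_pow hp).1 hn
    obtain ⟨b, -, rfl⟩ := (Nat.dvd_prime_pow hp).1 hm
    exact (le_total a b).elim (fun h => hnm (pow_dvd_pow p h)) (fun h => hmn (pow_dvd_pow p h))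
  · rintro ⟨hn1, hnN, hN⟩
    by_cases hpp : IsPrimePow n
    · obtain ⟨p, k, hp, hk, rfl⟩ := (isPrimePow_nat_iff n).1 hpp
      obtain ⟨q, hq, hqN, hqp⟩ : ∃ q : ℕ, q.Prime ∧ q ∣ N ∧ q ≠ p := by
        by_contra! hunique
        exact hN (isPrimePow_iff_unique_prime_dvd.2
          ⟨p, ⟨hp, (dvd_pow_self p hk.ne').trans hn⟩, fun q hq => hunique q hq.1 hq.2⟩)
      refine ⟨q, hqN, fun h => hqp ?_, fun h => hqp ?_⟩
      · exact (Nat.prime_dvd_prime_iff_eq hq hp).1 (hq.dvd_of_dvd_pow h)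
      · exact ((Nat.prime_dvd_prime_iff_eq hp hq).1 ((dvd_pow_self p hk.ne').trans h)).symm
    · have hNn : ¬ N ∣ n := fun h => hnN (Nat.dvd_antisymm hn h)
      obtain ⟨p, k, hp, hpN, hpn⟩ :
          ∃ p k : ℕ, p.Prime ∧ p ^ k ∣ N ∧ ¬ p ^ k ∣ n := by
        rw [Nat.dvd_iff_prime_pow_dvd_dvd] at hNn
        simpa only [not_forall, exists_prop] using hNn
      have hk : k ≠ 0 := by
        rintro rfl
        exact hpn (one_dvd n)
      exact ⟨p ^ k, hpN, hpn, fun h => hpp ((hp.isPrimePow.pow hk).dvd h hn1)⟩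

section Domination

variable {V : Type*} {Γ : SimpleGraph V}

theorem isDominatingSet_singleton_iff {v : V} : IsDominatingSet Γ {v} ↔ Γ.IsUniversal v := by
  simp only [IsDominatingSet, SimpleGraph.IsUniversal, Set.mem_singleton_iff, exists_eq_left,
    or_iff_not_imp_left]
  exact forall_congr' fun w => imp_congr_left ne_comm

theorem dominationNumber_ne_zero [Finite V] [Nonempty V] : dominationNumber Γ ≠ 0 := by
  intro h
  obtain ⟨S, hS, hcard⟩ | hempty := Nat.sInf_eq_zero.1 h
  · obtain rfl := (Set.ncard_eq_zero S.toFinite).1 hcard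
    simpa [IsDominatingSet] using hS (Classical.arbitrary V)
  · exact hempty.subset ⟨Set.univ, fun v => Or.inl (Set.mem_univ v), rfl⟩

theorem dominationNumber_eq_one_iff [Finite V] [Nonempty V] :
    dominationNumber Γ = 1 ↔ ∃ v, Γ.IsUniversal v := by
  constructor
  · intro h
    obtain ⟨S, hS, hcard⟩ := Nat.sInf_mem (Nat.nonempty_of_sInf_eq_succ h)
    obtain ⟨v, rfl⟩ := Set.ncard_eq_one.1 (hcard.trans h)
    exact ⟨v, isDominatingSet_singleton_iff.1 hS⟩
  · rintro ⟨v, hv⟩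
    refine le_antisymm (Nat.sInf_le ?_) (Nat.one_le_iff_ne_zero.2 dominationNumber_ne_zero)
    exact ⟨{v}, isDominatingSet_singleton_iff.2 hv, Set.ncard_singleton v⟩

end Domination

section CyclicSubgroups

open Subgroup

variable {G : Type*} [Group G] {d x y : G}

theorem forall_isCyclic_subgroup_iff {P : Subgroup G → Prop} :
    (∀ C : Subgroup G, IsCyclic C → P C) ↔ ∀ d : G, P (zpowers d) := by
  refine ⟨fun h d => h _ inferInstance, fun h C hC => ?_⟩
  obtain ⟨d, rfl⟩ := C.isCyclic_iff_exists_zpowers_eq_top.1 hC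
  exact h d

theorem isCyclic_closure_pair_iff :
    IsCyclic (closure ({x, y} : Set G)) ↔ ∃ d, x ∈ zpowers d ∧ y ∈ zpowers d := by
  have hle (d : G) : closure {x, y} ≤ zpowers d ↔ x ∈ zpowers d ∧ y ∈ zpowers d := by
    rw [closure_le, Set.pair_subset_iff, SetLike.mem_coe, SetLike.mem_coe]
  constructor
  · intro h
    obtain ⟨d, hd⟩ := (Subgroup.isCyclic_iff_exists_zpowers_eq_top _).1 h
    exact ⟨d, (hle d).1 hd.ge⟩
  · rintro ⟨d, hd⟩
    exact isCyclic_of_le ((hle d).2 hd)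

theorem exists_mem_zpowers_orderOf_eq (hd : IsOfFinOrder d) {n : ℕ} (hn : n ∣ orderOf d) :
    ∃ y ∈ zpowers d, orderOf y = n :=
  ⟨d ^ (orderOf d / n), npow_mem_zpowers _ _, orderOf_pow_orderOf_div hd.orderOf_pos.ne' hn⟩

theorem pow_gcd_orderOf_mem_zpowers_pow (d : G) (b : ℕ) :
    d ^ (orderOf d).gcd b ∈ zpowers (d ^ b) := by
  refine mem_zpowers_iff.2 ⟨(orderOf d).gcdB b, ?_⟩
  rw [← zpow_natCast d ((orderOf d).gcd b), Nat.gcd_eq_gcd_ab, zpow_add, zpow_mul, zpow_mul,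
    zpow_natCast, zpow_natCast, pow_orderOf_eq_one, one_zpow, one_mul]

theorem mem_zpowers_iff_orderOf_dvd (hd : IsOfFinOrder d) (hx : x ∈ zpowers d)
    (hy : y ∈ zpowers d) : x ∈ zpowers y ↔ orderOf x ∣ orderOf y := by
  refine ⟨orderOf_dvd_of_mem_zpowers, fun h => ?_⟩
  obtain ⟨a, rfl⟩ := (Submonoid.mem_powers_iff _ _).1 (hd.mem_powers_iff_mem_zpowers.2 hx)
  obtain ⟨b, rfl⟩ := (Submonoid.mem_powers_iff _ _).1 (hd.mem_powers_iff_mem_zpowers.2 hy)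
  have hgcd : (orderOf d).gcd b * orderOf (d ^ b) = orderOf d := by
    rw [hd.orderOf_pow, Nat.mul_div_cancel' (Nat.gcd_dvd_left _ _)]
  have hdvd : (orderOf d).gcd b * orderOf (d ^ b) ∣ a * orderOf (d ^ b) := by
    rw [hgcd, orderOf_dvd_iff_pow_eq_one, pow_mul]
    exact orderOf_dvd_iff_pow_eq_one.1 h
  obtain ⟨c, rfl⟩ := Nat.dvd_of_mul_dvd_mul_right hd.pow.orderOf_pos hdvd
  rw [pow_mul]
  exact pow_mem (pow_gcd_orderOf_mem_zpowers_pow d b) c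

theorem left_mem_zpowers_mul_of_coprime (h : Commute x y)
    (hxy : (orderOf x).Coprime (orderOf y)) : x ∈ zpowers (x * y) := by
  obtain ⟨m, hm⟩ := exists_pow_eq_self_of_coprime hxy.symm
  have hpow : (x * y) ^ orderOf y = x ^ orderOf y := by
    rw [h.mul_pow, pow_orderOf_eq_one, mul_one]
  have hmem : ((x * y) ^ orderOf y) ^ m ∈ zpowers (x * y) := pow_mem (npow_mem_zpowers _ _) m
  rwa [hpow, hm] at hmem

theorem right_mem_zpowers_mul_of_coprime (h : Commute x y)
    (hxy : (orderOf x).Coprime (orderOf y)) : y ∈ zpowers (x * y) :=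
  by
  rw [h.eq]
  exact left_mem_zpowers_mul_of_coprime h.symm hxy.symm

theorem isMaxCyclic_zpowers_iff (hG : IsMulTorsion G) :
    IsMaxCyclic (zpowers x) ↔ ∀ d, x ∈ zpowers d → orderOf x = orderOf d := by
  rw [IsMaxCyclic, forall_isCyclic_subgroup_iff, and_iff_right (inferInstance : IsCyclic _)]
  refine forall_congr' fun d => ?_
  rw [zpowers_le]
  refine imp_congr_right fun hx => ⟨fun h => ?_, fun h => ?_⟩
  · rw [← Nat.card_zpowers x, h, Nat.card_zpowers]
  · refine le_antisymm (zpowers_le.2 hx) (zpowers_le.2 ?_)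
    exact (mem_zpowers_iff_orderOf_dvd (hG d) (mem_zpowers d) hx).2 h.symm.dvd

end CyclicSubgroups

section DifferenceGraph

open Subgroup

variable {G : Type*} [Group G] {u v x y : G}

theorem diffAdj_iff :
    diffAdj x y ↔ (∃ d, x ∈ zpowers d ∧ y ∈ zpowers d) ∧ y ∉ zpowers x ∧ x ∉ zpowers y := by
  simp only [diffAdj, isCyclic_closure_pair_iff, mem_zpowers_iff, eq_comm]

theorem diffAdj_comm : diffAdj x y ↔ diffAdj y x := by
  rw [diffAdj, diffAdj, Set.pair_comm, and_comm (a := ¬ ∃ k : ℤ, y = x ^ k)]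

theorem diffAdj_inv_left : diffAdj x⁻¹ y ↔ diffAdj x y := by
  simp only [diffAdj_iff, inv_mem_iff, zpowers_inv]

theorem diffAdj_iff_orderOf (hG : IsMulTorsion G) :
    diffAdj x y ↔ (∃ d, x ∈ zpowers d ∧ y ∈ zpowers d) ∧
      ¬ orderOf y ∣ orderOf x ∧ ¬ orderOf x ∣ orderOf y := by
  rw [diffAdj_iff]
  refine and_congr_right fun ⟨d, hx, hy⟩ => ?_
  rw [mem_zpowers_iff_orderOf_dvd (hG d) hx hy, mem_zpowers_iff_orderOf_dvd (hG d) hy hx]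

theorem exists_diffAdj_iff_exists_dvd (hG : IsMulTorsion G) :
    (∃ y, diffAdj x y) ↔
      ∃ d, x ∈ zpowers d ∧ ∃ m, m ∣ orderOf d ∧ ¬ m ∣ orderOf x ∧ ¬ orderOf x ∣ m := by
  simp only [diffAdj_iff_orderOf hG]
  constructor
  · rintro ⟨y, ⟨d, hx, hy⟩, hyx, hxy⟩
    exact ⟨d, hx, orderOf y, orderOf_dvd_of_mem_zpowers hy, hyx, hxy⟩
  · rintro ⟨d, hx, m, hm, hmx, hxm⟩
    obtain ⟨y, hy, rfl⟩ := exists_mem_zpowers_orderOf_eq (hG d) hm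
    exact ⟨y, ⟨d, hx, hy⟩, hmx, hxm⟩

theorem exists_diffAdj_iff (hG : IsMulTorsion G) :
    (∃ y, diffAdj x y) ↔ x ≠ 1 ∧ ¬ IsMaxCyclic (zpowers x) ∧
      ¬ ∀ C : Subgroup G, IsCyclic C → x ∈ C → IsPrimePow (Nat.card C) := by
  simp only [isMaxCyclic_zpowers_iff hG, forall_isCyclic_subgroup_iff, Nat.card_zpowers,
    not_forall, exists_prop]
  have hvertex : (∃ y, diffAdj x y) ↔ ∃ d, x ∈ zpowers d ∧
      orderOf x ≠ 1 ∧ orderOf x ≠ orderOf d ∧ ¬ IsPrimePow (orderOf d) := by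
    rw [exists_diffAdj_iff_exists_dvd hG]
    exact exists_congr fun d => and_congr_right fun hx =>
      exists_dvd_incomparable_iff (orderOf_dvd_of_mem_zpowers hx)
  rw [hvertex, ne_eq x, ← orderOf_eq_one_iff (x := x)]
  constructor
  · rintro ⟨d, hx, hx1, hne, hpp⟩
    exact ⟨hx1, ⟨d, hx, hne⟩, d, hx, hpp⟩
  · rintro ⟨hx1, ⟨d, hxd, hne⟩, e, hxe, hpp⟩
    rcases ne_or_eq (orderOf x) (orderOf e) with hxe_ne | hxe_eq
    · exact ⟨e, hxe, hx1, hxe_ne, hpp⟩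
    · refine ⟨d, hxd, hx1, hne, fun hd => hpp ?_⟩
      exact hxe_eq ▸ hd.dvd (orderOf_dvd_of_mem_zpowers hxd) hx1

theorem diffAdj_iff_of_orderOf_eq_two (hG : IsMulTorsion G) (hu : orderOf u = 2) :
    diffAdj u v ↔ v ≠ 1 ∧ Odd (orderOf v) ∧ Commute u v := by
  rw [diffAdj_iff_orderOf hG, hu, ← even_iff_two_dvd, Nat.not_even_iff_odd]
  constructor
  · rintro ⟨⟨d, hud, hvd⟩, hv, hodd⟩
    exact ⟨by rintro rfl; simp at hv, hodd, setLike_mul_comm hud hvd⟩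
  · rintro ⟨hv1, hodd, hc⟩
    have hcop : (orderOf u).Coprime (orderOf v) := hu ▸ hodd.coprime_two_left
    refine ⟨⟨u * v, left_mem_zpowers_mul_of_coprime hc hcop,
      right_mem_zpowers_mul_of_coprime hc hcop⟩, fun h => hv1 ?_, hodd⟩
    exact orderOf_eq_one_iff.1 (hodd.coprime_two_right.eq_one_of_dvd h)

theorem exists_diffAdj_iff_of_orderOf_eq_two (hG : IsMulTorsion G) (hu : orderOf u = 2) :
    (∃ y, diffAdj u y) ↔ ∃ g, Commute u g ∧ (orderOf g).Prime ∧ Odd (orderOf g) := by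
  simp only [diffAdj_iff_of_orderOf_eq_two hG hu]
  constructor
  · rintro ⟨y, hy1, hodd, hc⟩
    obtain ⟨p, hp, hpy⟩ := Nat.exists_prime_and_dvd (mt orderOf_eq_one_iff.1 hy1)
    obtain ⟨g, hg, rfl⟩ := exists_mem_zpowers_orderOf_eq (hG y) hpy
    obtain ⟨k, rfl⟩ := mem_zpowers_iff.1 hg
    exact ⟨y ^ k, hc.zpow_right k, hp, hodd.of_dvd_nat hpy⟩
  · rintro ⟨g, hc, hp, hodd⟩
    exact ⟨g, mt orderOf_eq_one_iff.2 hp.ne_one, hodd, hc⟩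

theorem diffGraph_adj_iff {a b : DiffVertex G} :
    (diffGraph G).Adj a b ↔ diffAdj (a : G) (b : G) := by
  rw [diffGraph, SimpleGraph.fromRel_adj, diffAdj_comm (x := (b : G)), or_self,
    and_iff_right_iff_imp]
  rintro h rfl
  exact (diffAdj_iff.1 h).2.1 (mem_zpowers _)

theorem diffGraph_adj_iff_of_orderOf_eq_two (hG : IsMulTorsion G) {u v : DiffVertex G}
    (hu : orderOf (u : G) = 2) :
    (diffGraph G).Adj u v ↔ (v : G) ≠ 1 ∧ Odd (orderOf (v : G)) ∧ Commute (u : G) v :=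
  diffGraph_adj_iff.trans (diffAdj_iff_of_orderOf_eq_two hG hu)

theorem orderOf_eq_two_of_isUniversal {u : DiffVertex G} (hu : (diffGraph G).IsUniversal u) :
    orderOf (u : G) = 2 := by
  obtain ⟨y, hy⟩ := u.2
  have hinv : (u : G)⁻¹ = u := by
    by_contra hne
    let w : DiffVertex G := ⟨(u : G)⁻¹, y, diffAdj_inv_left.2 hy⟩
    have huw : u ≠ w := fun h => hne (congrArg Subtype.val h).symm
    have hadj : diffAdj (u : G) (w : G) := diffGraph_adj_iff.1 (hu huw)
    exact (diffAdj_iff.1 hadj).2.1 (inv_mem (mem_zpowers _))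
  have hu1 : (u : G) ≠ 1 := fun h => (diffAdj_iff.1 hy).2.2 (h ▸ one_mem _)
  have hu_sq : (u : G) ^ 2 = 1 := by rw [pow_two, ← inv_eq_iff_mul_eq_one, hinv]
  exact orderOf_eq_prime hu_sq hu1

theorem prime_orderOf_of_isUniversal (hG : IsMulTorsion G) {u v : DiffVertex G}
    (hu : (diffGraph G).IsUniversal u) (huv : u ≠ v) : (orderOf (v : G)).Prime := by
  have hu2 := orderOf_eq_two_of_isUniversal hu
  obtain ⟨hv1, hodd, hc⟩ := (diffGraph_adj_iff_of_orderOf_eq_two hG hu2).1 (hu huv)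
  rw [ne_eq, ← orderOf_eq_one_iff] at hv1
  by_contra hv_prime
  obtain ⟨p, hp, hpv⟩ := Nat.exists_prime_and_dvd hv1
  have hcop : (orderOf (u : G)).Coprime (orderOf (v : G)) := hu2 ▸ hodd.coprime_two_left
  have huv_order : orderOf (u * v : G) = 2 * orderOf (v : G) := by
    rw [hc.orderOf_mul_eq_mul_orderOf_of_coprime hcop, hu2]
  obtain ⟨w, hw, hw_order⟩ := exists_mem_zpowers_orderOf_eq (hG (u * v : G))
    (huv_order ▸ mul_dvd_mul_left 2 hpv : 2 * p ∣ _)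
  have hwv : diffAdj w v := by
    rw [diffAdj_iff_orderOf hG, hw_order]
    refine ⟨⟨u * v, hw, right_mem_zpowers_mul_of_coprime hc hcop⟩, fun h => ?_, fun h => ?_⟩
    · have hvp : orderOf (v : G) ∣ p := hodd.coprime_two_right.dvd_of_dvd_mul_left h
      exact hv_prime (((Nat.dvd_prime hp).1 hvp).resolve_left hv1 ▸ hp)
    · exact Nat.not_even_iff_odd.2 hodd (even_iff_two_dvd.2 ((dvd_mul_right 2 p).trans h))
  let w' : DiffVertex G := ⟨w, v, hwv⟩
  have huw : u ≠ w' := by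
    rintro rfl
    exact hp.ne_one (Nat.eq_of_mul_eq_mul_left two_pos (hw_order.symm.trans hu2))
  have hw_odd : Odd (orderOf w) :=
    ((diffGraph_adj_iff_of_orderOf_eq_two hG hu2).1 (hu huw)).2.1
  exact Nat.not_even_iff_odd.2 hw_odd (hw_order ▸ even_two_mul p)

theorem isUniversal_iff (hG : IsMulTorsion G) {u : DiffVertex G} :
    (diffGraph G).IsUniversal u ↔ orderOf (u : G) = 2 ∧ ∀ v : DiffVertex G, u ≠ v →
      (orderOf (v : G)).Prime ∧ Odd (orderOf (v : G)) ∧ Commute (u : G) v := by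
  constructor
  · intro hu
    have hu2 := orderOf_eq_two_of_isUniversal hu
    refine ⟨hu2, fun v huv => ⟨prime_orderOf_of_isUniversal hG hu huv, ?_⟩⟩
    exact ((diffGraph_adj_iff_of_orderOf_eq_two hG hu2).1 (hu huv)).2
  · rintro ⟨hu2, h⟩ v huv
    obtain ⟨hp, hodd, hc⟩ := h v huv
    exact (diffGraph_adj_iff_of_orderOf_eq_two hG hu2).2
      ⟨mt orderOf_eq_one_iff.2 hp.ne_one, hodd, hc⟩

theorem eq_of_isUniversal_of_orderOf_eq_two (hG : IsMulTorsion G) {u : DiffVertex G}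
    (hu : (diffGraph G).IsUniversal u) {w : G} (hw : orderOf w = 2)
    (h : ∃ g, Commute w g ∧ (orderOf g).Prime ∧ Odd (orderOf g)) : w = u := by
  by_contra hne
  let w' : DiffVertex G := ⟨w, (exists_diffAdj_iff_of_orderOf_eq_two hG hw).2 h⟩
  have hodd : Odd (orderOf w) :=
    (((isUniversal_iff hG).1 hu).2 w' fun h => hne (congrArg Subtype.val h).symm).2.1
  rw [hw] at hodd
  exact Nat.not_odd_iff_even.2 even_two hodd

theorem IsPhiGroup.exists_isUniversal (hG : IsMulTorsion G) (h : IsPhiGroup G) :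
    ∃ u, (diffGraph G).IsUniversal u := by
  obtain ⟨u, ⟨hu2, hu⟩, -, hodd, heven⟩ := h
  refine ⟨⟨u, (exists_diffAdj_iff_of_orderOf_eq_two hG hu2).2 hu⟩,
    (isUniversal_iff hG).2 ⟨hu2, fun v huv => ?_⟩⟩
  obtain ⟨hv1, hmax, hpp⟩ := (exists_diffAdj_iff hG).1 v.2
  have hvu : (v : G) ≠ u := fun h => huv (Subtype.ext h.symm)
  have hv_odd : Odd (orderOf (v : G)) := by
    by_contra hv_even
    exact (heven v hvu (Nat.not_odd_iff_even.1 hv_even)).elim hmax hpp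
  obtain ⟨hp, hc⟩ := ((hodd v hv1 hv_odd).resolve_left hmax).resolve_left hpp
  exact ⟨hp, hv_odd, hc.symm⟩

theorem isPhiGroup_of_isUniversal (hG : IsMulTorsion G) {u : DiffVertex G}
    (hu : (diffGraph G).IsUniversal u) : IsPhiGroup G := by
  obtain ⟨hu2, hvertex⟩ := (isUniversal_iff hG).1 hu
  have alternatives (g : G) (hg1 : g ≠ 1) (hgu : g ≠ u) : IsMaxCyclic (zpowers g) ∨
      (∀ C : Subgroup G, IsCyclic C → g ∈ C → IsPrimePow (Nat.card C)) ∨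
      (orderOf g).Prime ∧ Odd (orderOf g) ∧ Commute (u : G) g := by
    by_cases hg : ∃ y, diffAdj g y
    · exact .inr (.inr (hvertex ⟨g, hg⟩ fun h => hgu (congrArg Subtype.val h).symm))
    · rw [exists_diffAdj_iff hG] at hg
      tauto
  refine ⟨u, ⟨hu2, (exists_diffAdj_iff_of_orderOf_eq_two hG hu2).1 u.2⟩,
    fun w => eq_of_isUniversal_of_orderOf_eq_two hG hu, fun g hg1 hodd => ?_,
    fun g hgu heven => ?_⟩
  · have hgu : g ≠ u := by
      rintro rfl
      exact Nat.not_odd_iff_even.2 even_two (hu2 ▸ hodd)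
    exact (alternatives g hg1 hgu).imp_right (.imp_right fun ⟨hp, _, hc⟩ => ⟨hp, hc.symm⟩)
  · have hg1 : g ≠ 1 := by
      rintro rfl
      exact Nat.not_even_one (orderOf_one (G := G) ▸ heven)
    exact (alternatives g hg1 hgu).imp_right
      fun h => h.resolve_right fun ⟨_, hodd, _⟩ => Nat.not_odd_iff_even.2 heven hodd

theorem isPhiGroup_iff_exists_isUniversal (hG : IsMulTorsion G) :
    IsPhiGroup G ↔ ∃ u, (diffGraph G).IsUniversal u :=
  ⟨IsPhiGroup.exists_isUniversal hG, fun ⟨_, hu⟩ => isPhiGroup_of_isUniversal hG hu⟩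

end DifferenceGraph

/-- Theorem 3.3: for a finite group `G` whose difference graph has at least one vertex,
`γ(𝒟(G)) = 1` iff `G` is a `Φ`-group; moreover, in that case the unique dominating set
of size one is `{u}`, where `u` is the unique involution commuting with at least one
element of odd prime order. -/
theorem domination_number_eq_one_iff_phiGroup
    (G : Type*) [Group G] [Finite G] (hne : Nonempty (DiffVertex G)) :
    (dominationNumber (diffGraph G) = 1 ↔ IsPhiGroup G) ∧
    (dominationNumber (diffGraph G) = 1 →
      ∃ u : G,
        (orderOf u = 2 ∧ ∃ g : G, Commute u g ∧ (orderOf g).Prime ∧ Odd (orderOf g)) ∧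
        (∀ w : G, orderOf w = 2 →
          (∃ g : G, Commute w g ∧ (orderOf g).Prime ∧ Odd (orderOf g)) → w = u) ∧
        (∀ S : Set (DiffVertex G), IsDominatingSet (diffGraph G) S → S.ncard = 1 →
          Subtype.val '' S = {u})) := by
  have hG : IsMulTorsion G := isMulTorsion_of_finite
  rw [dominationNumber_eq_one_iff, isPhiGroup_iff_exists_isUniversal hG]
  refine ⟨Iff.rfl, fun ⟨u, hu⟩ => ?_⟩
  have hu2 := orderOf_eq_two_of_isUniversal hu
  refine ⟨u, ⟨hu2, (exists_diffAdj_iff_of_orderOf_eq_two hG hu2).1 u.2⟩,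
    fun w => eq_of_isUniversal_of_orderOf_eq_two hG hu, fun S hS hcard => ?_⟩
  obtain ⟨v, rfl⟩ := Set.ncard_eq_one.1 hcard
  have hv2 := orderOf_eq_two_of_isUniversal (isDominatingSet_singleton_iff.1 hS)
  rw [Set.image_singleton, eq_of_isUniversal_of_orderOf_eq_two hG hu hv2
    ((exists_diffAdj_iff_of_orderOf_eq_two hG hv2).1 v.2)]
end

section
/- Let n ≥ 3 be a positive integer that is not a prime power. Then the difference graph of the dihedral group D_{2n} of order 2n is isomorphic (as a graph) to the difference graph of the cyclic group Z_n. -/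
/-!
An injective homomorphism preserves and reflects adjacency, so it embeds one difference graph into
the other, and the embedding is onto as soon as every vertex lies in the range. Apply this to the
inclusion of the rotations into the dihedral group: a reflection generates a maximal cyclic
subgroup, so whatever generates a cyclic group together with it is one of its powers, and no
reflection is a vertex.
-/

section DiffGraph

variable {G H : Type*} [Group G] [Group H] {x y : G}

theorem diffAdj.symm (h : diffAdj x y) : diffAdj y x :=
  ⟨Set.pair_comm x y ▸ h.1, h.2.2, h.2.1⟩

theorem diffAdj.ne (h : diffAdj x y) : x ≠ y := fun hxy =>
  h.2.1 ⟨1, by rw [zpow_one, hxy]⟩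

theorem diffGraph_adj {a b : DiffVertex G} : (diffGraph G).Adj a b ↔ diffAdj a.1 b.1 := by
  rw [diffGraph, SimpleGraph.fromRel_adj]
  exact ⟨fun h => h.2.elim id diffAdj.symm, fun h => ⟨ne_of_apply_ne Subtype.val h.ne, .inl h⟩⟩

theorem IsMaxCyclic.not_diffAdj (hx : IsMaxCyclic (Subgroup.zpowers x)) : ¬ diffAdj x y := by
  rintro ⟨hcyc, hy, -⟩
  have hle : Subgroup.zpowers x ≤ Subgroup.closure {x, y} :=
    Subgroup.zpowers_le.2 (Subgroup.subset_closure (Set.mem_insert x {y}))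
  have hmem : y ∈ Subgroup.zpowers x := by
    rw [hx.2 _ hcyc hle]
    exact Subgroup.subset_closure (Set.mem_insert_of_mem x rfl)
  obtain ⟨k, hk⟩ := hmem
  exact hy ⟨k, hk.symm⟩

theorem diffAdj_map_iff {f : G →* H} (hf : Function.Injective f) :
    diffAdj (f x) (f y) ↔ diffAdj x y := by
  have hcyc : IsCyclic (Subgroup.closure {f x, f y}) ↔ IsCyclic (Subgroup.closure {x, y}) := by
    rw [← Set.image_pair, ← MonoidHom.map_closure]
    exact ((Subgroup.closure {x, y}).equivMapOfInjective f hf).isCyclic.symm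
  simp only [diffAdj, ← map_zpow, hf.eq_iff, hcyc]

/-- The embedding of difference graphs induced by an injective group homomorphism. -/
def diffGraphEmbedding (f : G →* H) (hf : Function.Injective f) : diffGraph G ↪g diffGraph H where
  toFun := Subtype.map f fun _ ⟨y, h⟩ => ⟨f y, (diffAdj_map_iff hf).2 h⟩
  inj' := Subtype.map_injective _ hf
  map_rel_iff' := by
    intro a b
    rw [diffGraph_adj, diffGraph_adj]
    exact diffAdj_map_iff hf

theorem diffGraphEmbedding_surjective {f : G →* H} (hf : Function.Injective f)
    (hrange : ∀ {z w : H}, diffAdj z w → z ∈ f.range) :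
    Function.Surjective (diffGraphEmbedding f hf) := by
  rintro ⟨z, w, hzw⟩
  obtain ⟨x, rfl⟩ := hrange hzw
  obtain ⟨y, rfl⟩ := hrange hzw.symm
  exact ⟨⟨x, y, (diffAdj_map_iff hf).1 hzw⟩, rfl⟩

end DiffGraph

section Dihedral

open DihedralGroup

variable {n : ℕ}

/-- The inclusion of the cyclic group of order `n` into the dihedral group as its rotations;
for `n = 0` this is `ℤ` inside the infinite dihedral group. -/
def rotationHom (n : ℕ) : Multiplicative (ZMod n) →* DihedralGroup n where
  toFun i := r i.toAdd
  map_one' := rfl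
  map_mul' _ _ := rfl

theorem rotationHom_injective : Function.Injective (rotationHom n) := fun _ _ h =>
  Multiplicative.toAdd.injective (r.inj h)

theorem eq_sr_of_sr_mem_zpowers {i : ZMod n} {g : DihedralGroup n}
    (h : sr i ∈ Subgroup.zpowers g) : g = sr i := by
  obtain ⟨k, hk : g ^ k = sr i⟩ := h
  cases g with
  | r j => simp only [r_zpow, reduceCtorEq] at hk
  | sr j =>
    have hsq : (sr j) ^ (2 : ℤ) = 1 := by rw [zpow_two, sr_mul_self]
    obtain ⟨m, rfl | rfl⟩ := k.even_or_odd'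
    · rw [zpow_mul, hsq, one_zpow, one_def] at hk
      cases hk
    · rwa [zpow_add_one, zpow_mul, hsq, one_zpow, one_mul] at hk

theorem isMaxCyclic_zpowers_sr (i : ZMod n) : IsMaxCyclic (Subgroup.zpowers (sr i)) := by
  refine ⟨inferInstance, fun D hD hle => ?_⟩
  obtain ⟨g, rfl⟩ := D.isCyclic_iff_exists_zpowers_eq_top.1 hD
  rw [eq_sr_of_sr_mem_zpowers (Subgroup.zpowers_le.1 hle)]

theorem diffAdj.mem_range_rotationHom {x y : DihedralGroup n} (h : diffAdj x y) :
    x ∈ (rotationHom n).range := by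
  cases x with
  | r i => exact ⟨.ofAdd i, rfl⟩
  | sr i => exact absurd h (isMaxCyclic_zpowers_sr i).not_diffAdj

end Dihedral

theorem dihedral_diffGraph_iso_cyclic_general (n : ℕ) :
    Nonempty (diffGraph (DihedralGroup n) ≃g diffGraph (Multiplicative (ZMod n))) :=
  have hsurj := diffGraphEmbedding_surjective rotationHom_injective
    (diffAdj.mem_range_rotationHom (n := n))
  ⟨(RelIso.ofSurjective _ hsurj).symm⟩

/-- For `n ≥ 3` not a prime power, the difference graph of the dihedral group of order
`2n` is isomorphic to the difference graph of the cyclic group of order `n`. -/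
theorem dihedral_diffGraph_iso_cyclic
    (n : ℕ) (hn : 3 ≤ n) (hpp : ¬ IsPrimePow n) :
    Nonempty (diffGraph (DihedralGroup n) ≃g diffGraph (Multiplicative (ZMod n))) :=
  dihedral_diffGraph_iso_cyclic_general n
end

section
/- Let p be a prime and let P be a finite non-cyclic p-group. If M₁, M₂, M₃ are three distinct maximal cyclic subgroups of P such that M₁ ≪ M₂ and M₂ ≪ M₃, then M₁ ≪ M₃. -/
/-- The domination relation on maximal cyclic subgroups of a `p`-group:
`M ≪ N` iff `p² ≤ |M| ≤ |N|` and `|M ∩ N| = |M| / p`. -/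
def SubgroupDominated {G : Type*} [Group G] (p : ℕ) (M N : Subgroup G) : Prop :=
  p ^ 2 ≤ Nat.card M ∧ Nat.card M ≤ Nat.card N ∧
    Nat.card ↥(M ⊓ N) = Nat.card M / p

/-!
For a prime `p`, domination `M ≪ N` says that `p² ≤ |M| ≤ |N|` and `|M : M ∩ N| = p`. If
`M₁ ≪ M₂ ≪ M₃`, then `M₁ ∩ M₂` and `M₂ ∩ M₃` are subgroups of the cyclic `p`-group `M₂`, of indices
`|M₂ : M₁ ∩ M₂| ≥ |M₁ : M₁ ∩ M₂| = p` and `p`. Subgroups of a cyclic `p`-group are ordered by their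
index, so `M₁ ∩ M₂ ≤ M₁ ∩ M₃ ≤ M₁`. As `M₁ ∩ M₂` has prime index in `M₁`, either `M₁ ∩ M₃` also has
index `p`, or `M₁ ≤ M₃`, which maximality of `M₁` excludes.
-/

section Index

variable {G : Type*} [Group G]

theorem zpow_mem_iff_index_dvd {g : G} (hg : ∀ x, x ∈ Subgroup.zpowers g) (H : Subgroup G) {k : ℤ} :
    g ^ k ∈ H ↔ (H.index : ℤ) ∣ k := by
  have : IsCyclic G := ⟨g, hg⟩
  have quotient_generator : ∀ y : G ⧸ H, y ∈ Subgroup.zpowers (g : G ⧸ H) := by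
    rintro ⟨x⟩
    obtain ⟨n, rfl⟩ := hg x
    exact ⟨n, rfl⟩
  rw [← QuotientGroup.eq_one_iff, QuotientGroup.mk_zpow, ← orderOf_dvd_iff_zpow_eq_one,
    orderOf_eq_card_of_forall_mem_zpowers quotient_generator, Subgroup.index]

theorem le_iff_index_dvd_index [IsCyclic G] {H K : Subgroup G} : H ≤ K ↔ K.index ∣ H.index := by
  refine ⟨Subgroup.index_dvd_of_le, fun h x hx ↦ ?_⟩
  obtain ⟨g, hg⟩ := IsCyclic.exists_generator (α := G)
  obtain ⟨k, rfl⟩ := hg x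
  exact (zpow_mem_iff_index_dvd hg K).2
    ((Int.natCast_dvd_natCast.2 h).trans ((zpow_mem_iff_index_dvd hg H).1 hx))

theorem le_iff_index_le_index_of_isPGroup [IsCyclic G] {p : ℕ} [Fact p.Prime] (hG : IsPGroup p G)
    {H K : Subgroup G} [H.FiniteIndex] [K.FiniteIndex] : H ≤ K ↔ K.index ≤ H.index := by
  obtain ⟨m, hm⟩ := hG.index H
  obtain ⟨n, hn⟩ := hG.index K
  have hp : 1 < p := (Fact.out : p.Prime).one_lt
  rw [le_iff_index_dvd_index, hm, hn, Nat.pow_dvd_pow_iff_le_right hp, Nat.pow_le_pow_iff_right hp]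

theorem card_inf_mul_relIndex (H K : Subgroup G) :
    Nat.card ↥(H ⊓ K) * K.relIndex H = Nat.card H := by
  simpa only [Subgroup.relIndex_bot_left, Subgroup.inf_relIndex_left] using
    Subgroup.relIndex_mul_relIndex ⊥ (H ⊓ K) H bot_le inf_le_left

theorem relIndex_le_relIndex_of_card_le {H K : Subgroup G} [Finite H]
    (h : Nat.card H ≤ Nat.card K) : K.relIndex H ≤ H.relIndex K := by
  have : Finite ↥(H ⊓ K) := Finite.Set.finite_inter_of_left _ _
  rw [← card_inf_mul_relIndex H K, ← card_inf_mul_relIndex K H, inf_comm K H] at h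
  exact Nat.le_of_mul_le_mul_left h Nat.card_pos

theorem card_inf_eq_card_div_iff_relIndex_eq {p : ℕ} (hp : 0 < p) {H K : Subgroup G}
    (hH : p ^ 2 ≤ Nat.card H) :
    Nat.card ↥(H ⊓ K) = Nat.card H / p ↔ K.relIndex H = p := by
  have hmul := card_inf_mul_relIndex H K
  refine ⟨fun h ↦ ?_, fun h ↦ ?_⟩
  · -- With `q = |H ∩ K| ≥ p` and `t = |H : H ∩ K|`, the equation `q = ⌊q * t / p⌋` gives
    -- `q * p ≤ q * t < q * p + p ≤ q * (p + 1)`.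
    have hle : p ≤ Nat.card ↥(H ⊓ K) := by
      rwa [h, Nat.le_div_iff_mul_le hp, ← sq]
    rw [← hmul, eq_comm, Nat.div_eq_iff hp] at h
    have hlt : Nat.card ↥(H ⊓ K) * K.relIndex H < Nat.card ↥(H ⊓ K) * (p + 1) := by
      rw [mul_add_one]
      lia
    exact le_antisymm (Nat.le_of_lt_succ (Nat.lt_of_mul_lt_mul_left hlt))
      (Nat.le_of_mul_le_mul_left h.1 (hp.trans_le hle))
  · rw [← hmul, h, Nat.mul_div_cancel _ hp]

end Index

namespace SubgroupDominated

variable {G : Type*} [Group G] {p : ℕ} {M₁ M₂ M₃ : Subgroup G}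

theorem finite_left (hp : 0 < p) (h : SubgroupDominated p M₁ M₂) : Finite M₁ :=
  Nat.finite_of_card_ne_zero ((pow_pos hp 2).trans_le h.1).ne'

theorem relIndex_eq (hp : 0 < p) (h : SubgroupDominated p M₁ M₂) : M₂.relIndex M₁ = p :=
  (card_inf_eq_card_div_iff_relIndex_eq hp h.1).1 h.2.2

theorem inf_le (hp : p.Prime) [IsCyclic M₂] (hM₂ : IsPGroup p M₂)
    (h₁₂ : SubgroupDominated p M₁ M₂) (h₂₃ : SubgroupDominated p M₂ M₃) : M₁ ⊓ M₂ ≤ M₃ := by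
  have : Fact p.Prime := ⟨hp⟩
  have : Finite M₁ := h₁₂.finite_left hp.pos
  have : Finite M₂ := h₂₃.finite_left hp.pos
  have hindex : M₃.relIndex M₂ ≤ M₁.relIndex M₂ := by
    rw [h₂₃.relIndex_eq hp.pos, ← h₁₂.relIndex_eq hp.pos]
    exact relIndex_le_relIndex_of_card_le h₁₂.2.1
  have hle : M₁.subgroupOf M₂ ≤ M₃.subgroupOf M₂ :=
    (le_iff_index_le_index_of_isPGroup hM₂).2 hindex
  rw [← Subgroup.map_subtype_le_map_subtype, Subgroup.subgroupOf_map_subtype,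
    Subgroup.subgroupOf_map_subtype] at hle
  exact hle.trans inf_le_left

end SubgroupDominated

theorem subgroupDominated_trans_general {G : Type*} [Group G] {p : ℕ} (hp : p.Prime)
    {M₁ M₂ M₃ : Subgroup G} [IsCyclic M₂] (hM₂ : IsPGroup p M₂) (hM₁₃ : ¬ M₁ ≤ M₃)
    (h₁₂ : SubgroupDominated p M₁ M₂) (h₂₃ : SubgroupDominated p M₂ M₃) :
    SubgroupDominated p M₁ M₃ := by
  have hdvd : M₃.relIndex M₁ ∣ p := by
    rw [← h₁₂.relIndex_eq hp.pos, ← Subgroup.inf_relIndex_left M₁ M₂]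
    exact Subgroup.relIndex_dvd_of_le_left M₁ (h₁₂.inf_le hp hM₂ h₂₃)
  have hne : M₃.relIndex M₁ ≠ 1 := mt Subgroup.relIndex_eq_one.1 hM₁₃
  have hindex : M₃.relIndex M₁ = p := (hp.eq_one_or_self_of_dvd _ hdvd).resolve_left hne
  exact ⟨h₁₂.1, h₁₂.2.1.trans h₂₃.2.1,
    (card_inf_eq_card_div_iff_relIndex_eq hp.pos h₁₂.1).2 hindex⟩

/-- Lemma 5.1: in a finite non-cyclic `p`-group, the domination relation on maximal
cyclic subgroups is transitive: if `M₁ ≪ M₂` and `M₂ ≪ M₃` for distinct maximal cyclic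
subgroups `M₁, M₂, M₃`, then `M₁ ≪ M₃`. -/
theorem subgroupDominated_trans
    (p : ℕ) (hp : p.Prime) (P : Type*) [Group P] [Finite P]
    (hP : IsPGroup p P) (hnc : ¬ IsCyclic P)
    (M₁ M₂ M₃ : Subgroup P)
    (hM₁ : IsMaxCyclic M₁) (hM₂ : IsMaxCyclic M₂) (hM₃ : IsMaxCyclic M₃)
    (h12 : M₁ ≠ M₂) (h13 : M₁ ≠ M₃) (h23 : M₂ ≠ M₃)
    (hd12 : SubgroupDominated p M₁ M₂) (hd23 : SubgroupDominated p M₂ M₃) :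
    SubgroupDominated p M₁ M₃ := by
  have : IsCyclic M₂ := hM₂.1
  exact subgroupDominated_trans_general hp (hP.to_subgroup M₂) (mt (hM₁.2 M₃ hM₃.1) h13) hd12 hd23
end
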